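/- (Proposition 1, limiting loss distribution.) Assume Λ ≠ 0 and let L̄ = Φ(Ξ/(ζ√T) − ΛY/ζ), where Y is standard normal. Then for every x ∈ (0,1), ℙ[L̄ ≤ x] = Φ((ζ·Φ⁻¹(x) − Σ·Φ⁻¹(p))/|Λ|), where p = Φ(Ξ/(Σ√T)). -/

import Mathlib

open MeasureTheory ProbabilityTheory Real Filter Set

/-- The density of the standard normal distribution. -/
noncomputable def stdPdf (y : ℝ) : ℝ := Real.exp (-y ^ 2 / 2) / Real.sqrt (2 * Real.pi)

/-- The cumulative distribution function `Φ` of the standard normal distribution. -/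
noncomputable def stdCdf (x : ℝ) : ℝ := ∫ y in Set.Iic x, stdPdf y

/-- The inverse `Φ⁻¹` of the standard normal cumulative distribution function: since `stdCdf`
is injective, `stdCdfInv` is the genuine inverse of `Φ` on `(0,1)`. -/
noncomputable def stdCdfInv : ℝ → ℝ := Function.invFun stdCdf

lemma stdPdf_eq : stdPdf = gaussianPDFReal 0 1 := by
  ext y
  simp [stdPdf, gaussianPDFReal, div_eq_mul_inv, mul_comm]

lemma stdPdf_pos (y : ℝ) : 0 < stdPdf y := by
  unfold stdPdf; positivity

lemma stdPdf_integrable : Integrable stdPdf := by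
  rw [stdPdf_eq]; exact integrable_gaussianPDFReal 0 1

lemma ofReal_stdCdf (x : ℝ) : ENNReal.ofReal (stdCdf x) = gaussianReal 0 1 (Iic x) := by
  rw [gaussianReal_apply_eq_integral 0 one_ne_zero, stdCdf, stdPdf_eq]

lemma stdCdf_nonneg (x : ℝ) : 0 ≤ stdCdf x :=
  integral_nonneg fun y => (stdPdf_pos y).le

lemma stdCdf_eq_cdf : stdCdf = cdf (gaussianReal 0 1) := by
  ext x
  have h := ofReal_stdCdf x
  rw [← ofReal_cdf] at h
  exact (ENNReal.ofReal_eq_ofReal_iff (stdCdf_nonneg x) (cdf_nonneg _ x)).1 h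

lemma stdCdf_sub (a b : ℝ) : stdCdf b - stdCdf a = ∫ y in a..b, stdPdf y :=
  intervalIntegral.integral_Iic_sub_Iic stdPdf_integrable.integrableOn
    stdPdf_integrable.integrableOn

lemma stdCdf_strictMono : StrictMono stdCdf := by
  intro a b hab
  have h := stdCdf_sub a b
  have h2 : 0 < ∫ y in a..b, stdPdf y :=
    intervalIntegral.intervalIntegral_pos_of_pos stdPdf_integrable.intervalIntegrable
      stdPdf_pos hab
  linarith

lemma stdCdf_continuous : Continuous stdCdf := by
  have h : stdCdf = fun b => stdCdf 0 + ∫ y in (0:ℝ)..b, stdPdf y := by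
    ext b
    rw [← stdCdf_sub]; ring
  rw [h]
  exact continuous_const.add (intervalIntegral.continuous_primitive
    (fun _ _ => stdPdf_integrable.intervalIntegrable) 0)

lemma stdCdf_surj {x : ℝ} (hx : x ∈ Set.Ioo (0 : ℝ) 1) : ∃ y, stdCdf y = x := by
  have h0 : Tendsto stdCdf atBot (nhds 0) := by
    rw [stdCdf_eq_cdf]; exact tendsto_cdf_atBot _
  have h1 : Tendsto stdCdf atTop (nhds 1) := by
    rw [stdCdf_eq_cdf]; exact tendsto_cdf_atTop _
  exact mem_range_of_exists_le_of_exists_ge stdCdf_continuous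
    (((h0.eventually_lt_const hx.1).exists).imp fun _ h => h.le)
    (((h1.eventually_const_lt hx.2).exists).imp fun _ h => h.le)

lemma stdCdfInv_stdCdf (y : ℝ) : stdCdfInv (stdCdf y) = y :=
  Function.leftInverse_invFun stdCdf_strictMono.injective y

/-- Proposition 1, limiting loss distribution: if `Λ ≠ 0` and
`L̄ = Φ(Ξ/(ζ√T) − ΛY/ζ)` with `Y` standard normal, then for every `x ∈ (0,1)`,
`ℙ[L̄ ≤ x] = Φ((ζ Φ⁻¹(x) − Σ Φ⁻¹(p))/|Λ|)` where `p = Φ(Ξ/(Σ√T))`. -/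
theorem limiting_loss_distribution
    {Ω : Type*} [MeasurableSpace Ω] (P : Measure Ω) [IsProbabilityMeasure P]
    (T A B μ α σ β ρ θ : ℝ)
    (hT : 0 < T) (hA : 0 < A) (hB : 0 < B) (hσ : 0 < σ) (hβ : 0 < β)
    (hρ : ρ ∈ Set.Icc (0 : ℝ) 1) (hθ : θ ∈ Set.Icc (0 : ℝ) 1)
    (Y : Ω → ℝ) (hmY : Measurable Y)
    (hY : Measure.map Y P = gaussianReal 0 1)
    (Sg Ξ ζ Λ : ℝ)
    (hSg : Sg = Real.sqrt (σ ^ 2 + β ^ 2 - 2 * σ * β * Real.sqrt (ρ * θ)))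
    (hΞ : Ξ = Real.log (B / A) - (μ - α - (σ ^ 2 - β ^ 2) / 2) * T)
    (hζ : ζ = Real.sqrt (σ ^ 2 * (1 - ρ) + β ^ 2 * (1 - θ)))
    (hΛ : Λ = σ * Real.sqrt ρ - β * Real.sqrt θ)
    (hSgpos : 0 < Sg) (hζpos : 0 < ζ) (hΛne : Λ ≠ 0)
    (p : ℝ) (hp : p = stdCdf (Ξ / (Sg * Real.sqrt T)))
    (x : ℝ) (hx : x ∈ Set.Ioo (0 : ℝ) 1) :
    P {ω | stdCdf (Ξ / (ζ * Real.sqrt T) - Λ * Y ω / ζ) ≤ x}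
      = ENNReal.ofReal (stdCdf ((ζ * stdCdfInv x - Sg * stdCdfInv p) / |Λ|)) := by
  obtain ⟨q, rfl⟩ := stdCdf_surj hx
  rw [hp, stdCdfInv_stdCdf, stdCdfInv_stdCdf, ofReal_stdCdf]
  have hs : 0 < Real.sqrt T := Real.sqrt_pos.2 hT
  have e1 : Sg * (Ξ / (Sg * Real.sqrt T)) = Ξ / Real.sqrt T := by
    field_simp
  rw [e1]
  have key : ∀ ω, stdCdf (Ξ / (ζ * Real.sqrt T) - Λ * Y ω / ζ) ≤ stdCdf q ↔
      -(Λ * Y ω) ≤ ζ * q - Ξ / Real.sqrt T := by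
    intro ω
    rw [stdCdf_strictMono.le_iff_le]
    have e2 : Ξ / (ζ * Real.sqrt T) - Λ * Y ω / ζ
        = (Ξ / Real.sqrt T - Λ * Y ω) / ζ := by
      field_simp
    rw [e2, div_le_iff₀ hζpos]
    constructor <;> intro h <;> linarith
  simp_rw [key]
  generalize ζ * q - Ξ / Real.sqrt T = c
  rcases lt_or_gt_of_ne hΛne with hneg | hpos
  · rw [← hY, Measure.map_apply hmY measurableSet_Iic]
    congr 1
    ext ω
    rw [abs_of_neg hneg, mem_preimage, mem_Iic, mem_ofPred_eq, le_div_iff₀ (by linarith)]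
    constructor <;> intro h <;> linarith
  · have hg : gaussianReal 0 1 = Measure.map (fun ω => -Y ω) P := by
      have h := gaussianReal_map_neg (μ := 0) (v := 1)
      rw [neg_zero, ← hY, Measure.map_map measurable_neg hmY] at h
      rw [← hY, ← h]; rfl
    rw [hg, Measure.map_apply (by fun_prop) measurableSet_Iic]
    congr 1
    ext ω
    rw [abs_of_pos hpos, mem_preimage, mem_Iic, mem_ofPred_eq, le_div_iff₀ hpos]
    constructor <;> intro h <;> linarith
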